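/- Let G be a connected finite simple graph and let H be a matching graph with 2 ≤ p(G) ≤ |V(H)| ≤ |V(G)|. Then there exists an injective map φ : V(H) → V(G) such that the superposition F = G ⊕_φ H is edge 2-connected if and only if G is not isomorphic to a star K_{1,n} with n odd. -/

import Mathlib

open SimpleGraph

/-- The superposition `G ⊕_φ H` of `G` and `H` with respect to an injective map
`φ : V(H) ↪ V(G)`. -/
def superpose {α β : Type*} (G : SimpleGraph α) (H : SimpleGraph β) (φ : β ↪ α) :
    SimpleGraph α :=
  G ⊔ SimpleGraph.map φ H

/-- A graph is edge 2-connected if it is connected and has no bridge. -/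
def TwoEdgeConnected {α : Type*} (G : SimpleGraph α) : Prop :=
  G.Connected ∧ ∀ e : Sym2 α, ¬ G.IsBridge e

/-- The graph obtained from `G` by deleting all its bridges; its connected
components are the biconnected components of `G`. -/
def bicompGraph {α : Type*} (G : SimpleGraph α) : SimpleGraph α :=
  G.deleteEdges {e | G.IsBridge e}

/-- A biconnected component `C` of `G` is pendant if exactly one bridge of `G` has an
endpoint in `C`. -/
def IsPendant {α : Type*} (G : SimpleGraph α)
    (C : (bicompGraph G).ConnectedComponent) : Prop :=
  ∃! e : Sym2 α, G.IsBridge e ∧ ∃ v ∈ C.supp, v ∈ e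

/-- `p(G)`: the number of pendant biconnected components of `G`. -/
noncomputable def numPendant {α : Type*} (G : SimpleGraph α) : ℕ :=
  {C : (bicompGraph G).ConnectedComponent | IsPendant G C}.ncard

/-- A matching graph is a nonempty graph in which every vertex has exactly one
neighbour (a disjoint union of copies of `K₂`). -/
def IsMatchingGraph {β : Type*} (H : SimpleGraph β) : Prop :=
  Nonempty β ∧ ∀ x : β, ∃! y : β, H.Adj x y

/-!
Every side of a bridge of `G` contains a pendant component, so the matching can be placed with its
vertices on both sides of every bridge. Among all such placements choose one for which the set of
*covered* bridges, those `f` separating the ends of some matching edge other than `f` itself, is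
maximal; if all bridges are covered then `F` is edge 2-connected.

Suppose a bridge `e` is not covered. If matching edges `ab` and `cd` lie on opposite sides of `e`,
then replacing them by `ac` and `bd` covers `e` and, since the bridges form a laminar family of
cuts, uncovers nothing. Maximality therefore confines all matching edges that do not cross `e` to
one side of `e`. It follows that `e = xy` is itself a matching edge and that all other matching
edges lie, say, on the side of `x`. Moving `x` to an unmatched vertex of its side, or replacing `xy`
and `cd` by `xc` and `yd`, would also cover `e`; maximality then forces the matching to be perfect
and every `xc` to be a bridge. So `G` is a star with an even number of vertices.

Conversely, in `F` every leaf of a star must be matched to another leaf, so the centre stays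
unmatched and the number of leaves is even.
-/

section SameSide

variable {V : Type*} {G : SimpleGraph V} {e f : Sym2 V} {a b c d u v w : V}

/-- `u` and `v` are connected by a walk of `G` avoiding the edge `f`. When `f` is a bridge of a
connected graph, this says that `u` and `v` lie on the same side of `f`. -/
def SameSide (G : SimpleGraph V) (f : Sym2 V) (u v : V) : Prop :=
  (G.deleteEdges {f}).Reachable u v

lemma sameSide_of_adj (h : G.Adj u v) (hf : s(u, v) ≠ f) : SameSide G f u v :=
  Adj.reachable <| deleteEdges_adj.2 ⟨h, hf⟩

lemma adj_of_isBridge (hG : G.Preconnected) (h : G.IsBridge s(u, v)) : G.Adj u v :=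
  h.reachable_iff_adj.1 (hG u v)

lemma SameSide.sameSide_or_forall_mem (h : SameSide G e a b) (f : Sym2 V) :
    SameSide G f a b ∨ ∀ p ∈ f, SameSide G e a p := by
  classical
  obtain ⟨q⟩ := h
  by_cases hf : f ∈ q.edges
  · exact .inr fun p hp ↦ (q.takeUntil p (Walk.mem_support_of_mem_edges hf hp)).reachable
  · exact .inl <| (q.toDeleteEdge f hf).reachable.mono <|
      deleteEdges_mono (deleteEdges_le _)

-- An edge `f` disconnecting one side of `e` lies within that side, so it spares the other side.
lemma SameSide.of_separates (hab : SameSide G e a b) (hcd : SameSide G e c d)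
    (hac : ¬ SameSide G e a c) (hf : ¬ SameSide G f a b) : SameSide G f c d := by
  have hfa := (hab.sameSide_or_forall_mem f).resolve_left hf
  refine (hcd.sameSide_or_forall_mem f).resolve_right fun hfc ↦ ?_
  induction f with
  | h p q => exact hac ((hfa p (by simp)).trans (hfc p (by simp)).symm)

lemma sameSide_left_or_right (hG : G.Preconnected) (x y u : V) :
    SameSide G s(x, y) x u ∨ SameSide G s(x, y) y u := by
  obtain ⟨p⟩ := hG x u
  by_contra hu
  obtain ⟨⟨⟨a, b⟩, hab⟩, -, ha, hb⟩ := p.exists_boundary_dart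
    {z | SameSide G s(x, y) x z ∨ SameSide G s(x, y) y z} (.inl Reachable.rfl) hu
  by_cases hxy : s(a, b) = s(x, y)
  · rcases Sym2.mem_iff.1 (hxy ▸ Sym2.mem_mk_right a b) with rfl | rfl
    · exact hb (.inl Reachable.rfl)
    · exact hb (.inr Reachable.rfl)
  · have hside := sameSide_of_adj hab hxy
    exact hb (ha.imp (·.trans hside) (·.trans hside))

lemma SameSide.of_not_of_not (hG : G.Preconnected) (huv : ¬ SameSide G f u v)
    (hvw : ¬ SameSide G f v w) : SameSide G f u w := by
  induction f with
  | h x y =>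
    rcases sameSide_left_or_right hG x y u with hu | hu <;>
    rcases sameSide_left_or_right hG x y v with hv | hv <;>
    rcases sameSide_left_or_right hG x y w with hw | hw <;>
    first
    | exact hu.symm.trans hw
    | exact absurd (hu.symm.trans hv) huv
    | exact absurd (hv.symm.trans hw) hvw

end SameSide

section Pendant

variable {V : Type*} {G : SimpleGraph V} {f : Sym2 V} {u v v' w w' : V}

lemma sameSide_of_reachable_bicompGraph (hf : G.IsBridge f) (h : (bicompGraph G).Reachable u v) :
    SameSide G f u v :=
  h.mono <| deleteEdges_anti <| Set.singleton_subset_iff.2 (show f ∈ {e | G.IsBridge e} from hf)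

lemma setOf_sameSide_ssubset (hG : G.Preconnected) (hw : G.IsBridge s(w, w'))
    (hv : G.IsBridge s(v', v)) (hwv : (bicompGraph G).Reachable w v)
    (hne : s(v', v) ≠ s(w, w')) :
    {t | SameSide G s(v', v) v' t} ⊂ {t | SameSide G s(w, w') w t} := by
  have hwv' : SameSide G s(w, w') w v' :=
    (sameSide_of_reachable_bicompGraph hw hwv).trans
      (sameSide_of_adj (adj_of_isBridge hG hv) hne).symm
  have hw_notMem : ¬ SameSide G s(v', v) v' w := fun h ↦
    hv (h.trans (sameSide_of_reachable_bicompGraph hv hwv))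
  refine ⟨fun t ht ↦ ?_, fun h ↦ hw_notMem (h (Reachable.refl w))⟩
  rcases SameSide.sameSide_or_forall_mem ht s(w, w') with h | h
  · exact hwv'.trans h
  · exact absurd (h w (by simp)) hw_notMem

theorem exists_isPendant_forall_sameSide [Finite V] (hG : G.Preconnected)
    (hw : G.IsBridge s(w, w')) :
    ∃ C, IsPendant G C ∧ ∀ t ∈ C.supp, SameSide G s(w, w') w t := by
  induction hS : {t | SameSide G s(w, w') w t} using WellFoundedLT.induction
    generalizing w w' with
  | ind S ih =>
  subst hS
  set C := (bicompGraph G).connectedComponentMk w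
  by_cases hC : IsPendant G C
  · exact ⟨C, hC, fun t ht ↦
      sameSide_of_reachable_bicompGraph hw (ConnectedComponent.exact ht).symm⟩
  obtain ⟨f, ⟨hf, v, hv, hvf⟩, hne⟩ :
      ∃ f, (G.IsBridge f ∧ ∃ v ∈ C.supp, v ∈ f) ∧ f ≠ s(w, w') := by
    by_contra! h
    exact hC ⟨s(w, w'), ⟨hw, w, rfl, by simp⟩, h⟩
  obtain ⟨v', rfl⟩ := Sym2.mem_iff_exists.1 hvf
  rw [Sym2.eq_swap] at hf hne
  have hlt := setOf_sameSide_ssubset hG hw hf (ConnectedComponent.exact hv).symm hne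
  obtain ⟨C', hC', hsub⟩ := ih _ hlt hf rfl
  exact ⟨C', hC', fun t ht ↦ hlt.subset (hsub t ht)⟩

/-- `S` contains a vertex on each side of each bridge of `G`. -/
def MeetsSides (G : SimpleGraph V) (S : Set V) : Prop :=
  ∀ f, G.IsBridge f → ∀ u, ∃ v ∈ S, SameSide G f u v

lemma MeetsSides.mono {S T : Set V} (hS : MeetsSides G S) (hST : S ⊆ T) : MeetsSides G T :=
  fun f hf u ↦ (hS f hf u).imp fun _ ↦ And.imp_left (hST ·)

theorem exists_meetsSides_ncard_le_numPendant [Finite V] (hG : G.Preconnected) :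
    ∃ S : Set V, MeetsSides G S ∧ S.ncard ≤ numPendant G := by
  refine ⟨(·.out) '' {C | IsPendant G C}, fun f hf u ↦ ?_, Set.ncard_image_le⟩
  obtain ⟨x, y, rfl, hxu⟩ : ∃ x y, f = s(x, y) ∧ SameSide G f u x := by
    induction f with
    | h x y =>
      rcases sameSide_left_or_right hG x y u with h | h
      · exact ⟨x, y, rfl, h.symm⟩
      · exact ⟨y, x, Sym2.eq_swap, h.symm⟩
  obtain ⟨C, hC, hside⟩ := exists_isPendant_forall_sameSide hG hf
  exact ⟨C.out, ⟨C, hC, rfl⟩, hxu.trans (hside _ C.out_eq)⟩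

end Pendant

section Covering

variable {V : Type*} {G M : SimpleGraph V} {e : Sym2 V} {a b c d u v : V}

/-- The bridges of `G` other than `uv` that separate `u` from `v`; when `G` is connected, these
are the bridges that are no longer bridges once the edge `uv` is added. -/
def bypassedBridges (G : SimpleGraph V) (u v : V) : Set (Sym2 V) :=
  {f | G.IsBridge f ∧ ¬ SameSide G f u v ∧ s(u, v) ≠ f}

/-- The bridges of `G` bypassed by some edge of `M`. -/
def coveredBridges (G M : SimpleGraph V) : Set (Sym2 V) :=
  {f | ∃ u v, M.Adj u v ∧ f ∈ bypassedBridges G u v}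

lemma bypassedBridges_comm (u v : V) : bypassedBridges G u v = bypassedBridges G v u := by
  ext f
  simp only [bypassedBridges, Set.mem_ofPred_eq, Sym2.eq_swap (a := u), SameSide, reachable_comm]

lemma bypassedBridges_eq_empty_of_adj (h : G.Adj u v) : bypassedBridges G u v = ∅ :=
  Set.eq_empty_of_forall_notMem fun _ ⟨_, hside, hne⟩ ↦ hside (sameSide_of_adj h hne)

theorem twoEdgeConnected_sup (hG : G.Connected) (h : ∀ f, G.IsBridge f → f ∈ coveredBridges G M) :
    TwoEdgeConnected (G ⊔ M) := by
  refine ⟨hG.mono le_sup_left, fun f hf ↦ ?_⟩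
  obtain ⟨u, v, huv, hfG, hside, hne⟩ := h f (hf.anti le_sup_left)
  have toSup {p q : V} (hpq : SameSide G f p q) : SameSide (G ⊔ M) f p q :=
    hpq.mono (deleteEdges_mono le_sup_left)
  have huv' : SameSide (G ⊔ M) f u v := sameSide_of_adj (.inr huv) hne
  induction f with
  | h x y =>
    by_cases hux : SameSide G s(x, y) u x
    · have hvy := SameSide.of_not_of_not hG.preconnected
        (fun h ↦ hside (hux.trans h.symm) : ¬ SameSide G s(x, y) v x) hfG
      exact hf ((toSup hux).symm.trans (huv'.trans (toSup hvy)))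
    · have huy := SameSide.of_not_of_not hG.preconnected hux hfG
      have hxv := SameSide.of_not_of_not hG.preconnected (fun h ↦ hux h.symm) hside
      exact hf ((toSup hxv).trans (huv'.symm.trans (toSup huy)))

lemma bypassedBridges_subset_of_not_sameSide (hG : G.Preconnected) (hab : SameSide G e a b)
    (hcd : SameSide G e c d) (hac : ¬ SameSide G e a c) :
    bypassedBridges G a b ⊆ bypassedBridges G a c ∪ bypassedBridges G b d := by
  rintro f ⟨hf, hfab, -⟩
  have hbd : ¬ SameSide G e b d := fun h ↦ hac (hab.trans (h.trans hcd.symm))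
  have hfe : f ≠ e := by rintro rfl; exact hfab hab
  have ne_of_not_sameSide {p q : V} (hpq : ¬ SameSide G e p q) : s(p, q) ≠ f := by
    rintro rfl
    exact hpq (sameSide_of_adj (adj_of_isBridge hG hf) hfe)
  have hfcd : SameSide G f c d := hab.of_separates hcd hac hfab
  by_cases hfac : SameSide G f a c
  · exact .inr ⟨hf, fun h ↦ hfab (hfac.trans (hfcd.trans h.symm)), ne_of_not_sameSide hbd⟩
  · exact .inl ⟨hf, hfac, ne_of_not_sameSide hac⟩

end Covering

section Optimal

variable {V : Type*} {G M : SimpleGraph V} {e : Sym2 V} {a b c d x y z : V}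

/-- Among the copies of `M` on the vertex set of `G` whose vertices of positive degree meet all
sides of bridges of `G`, none covers a strictly larger set of bridges than `M`. -/
def IsOptimal (G M : SimpleGraph V) : Prop :=
  MaximalFor (fun M' ↦ Nonempty (M ≃g M') ∧ MeetsSides G M'.support) (coveredBridges G) M

theorem exists_isOptimal [Finite V] (h : MeetsSides G M.support) :
    ∃ M', Nonempty (M ≃g M') ∧ IsOptimal G M' := by
  obtain ⟨M', ⟨⟨E⟩, hM'⟩, hmax⟩ := exists_maximalFor_of_wellFoundedGT
    (fun M' ↦ Nonempty (M ≃g M') ∧ MeetsSides G M'.support) (coveredBridges G) ⟨M, ⟨.refl⟩, h⟩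
  exact ⟨M', ⟨E⟩, ⟨⟨.refl⟩, hM'⟩, fun _ ⟨⟨E'⟩, hN⟩ ↦ hmax ⟨⟨E.trans E'⟩, hN⟩⟩

lemma coveredBridges_subset_comap_swap [DecidableEq V]
    (h : ∀ u v, M.Adj u v → u = x ∨ u = z →
      bypassedBridges G u v ⊆ coveredBridges G (M.comap (Equiv.swap x z))) :
    coveredBridges G M ⊆ coveredBridges G (M.comap (Equiv.swap x z)) := by
  rintro f ⟨u, v, huv, hf⟩
  by_cases hu : u = x ∨ u = z
  · exact h u v huv hu hf
  by_cases hv : v = x ∨ v = z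
  · exact h v u huv.symm hv (bypassedBridges_comm u v ▸ hf)
  push Not at hu hv
  exact ⟨u, v, by simpa [Equiv.swap_apply_of_ne_of_ne, hu, hv] using huv, hf⟩

lemma IsOptimal.coveredBridges_comap_swap_subset [DecidableEq V] (hm : IsOptimal G M)
    (hmeets : MeetsSides G (M.comap (Equiv.swap x z)).support)
    (h : ∀ u v, M.Adj u v → u = x ∨ u = z →
      bypassedBridges G u v ⊆ coveredBridges G (M.comap (Equiv.swap x z))) :
    coveredBridges G (M.comap (Equiv.swap x z)) ⊆ coveredBridges G M :=
  hm.2 ⟨⟨(Iso.comap (Equiv.swap x z) M).symm⟩, hmeets⟩ (coveredBridges_subset_comap_swap h)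

lemma mem_support_comap_swap [DecidableEq V] {w : V} :
    w ∈ (M.comap (Equiv.swap x z)).support ↔ Equiv.swap x z w ∈ M.support :=
  (Equiv.swap x z).surjective.exists.symm

-- Exchanging `b` and `c` replaces the matching edges `ab` and `cd` by `ac` and `bd`.
theorem IsOptimal.bypassedBridges_union_subset (hm : IsOptimal G M)
    (hM : Relator.RightUnique M.Adj) (hab : M.Adj a b) (hcd : M.Adj c d) (hac : a ≠ c) (had : a ≠ d)
    (h : bypassedBridges G a b ∪ bypassedBridges G c d ⊆
      bypassedBridges G a c ∪ bypassedBridges G b d) :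
    bypassedBridges G a c ∪ bypassedBridges G b d ⊆ coveredBridges G M := by
  classical
  set M' := M.comap (Equiv.swap b c)
  have hbc : b ≠ c := by rintro rfl; exact had (hM hab.symm hcd)
  have hbd : b ≠ d := by rintro rfl; exact hac (hM hab.symm hcd.symm)
  have hac' : M'.Adj a c := by
    simpa [M', Equiv.swap_apply_of_ne_of_ne hab.ne hac] using hab
  have hbd' : M'.Adj b d := by
    simpa [M', Equiv.swap_apply_of_ne_of_ne hbd.symm hcd.ne.symm] using hcd
  have hnew : bypassedBridges G a c ∪ bypassedBridges G b d ⊆ coveredBridges G M' :=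
    Set.union_subset (fun f hf ↦ ⟨a, c, hac', hf⟩) (fun f hf ↦ ⟨b, d, hbd', hf⟩)
  refine hnew.trans (hm.coveredBridges_comap_swap_subset ?_ ?_)
  · intro f hf u
    obtain ⟨v, hv, huv⟩ := hm.1.2 f hf u
    refine ⟨v, mem_support_comap_swap.2 ?_, huv⟩
    rw [Equiv.swap_apply_def]
    split_ifs
    exacts [⟨d, hcd⟩, ⟨a, hab.symm⟩, hv]
  · rintro u v huv (rfl | rfl)
    · rw [hM huv hab.symm, bypassedBridges_comm]
      exact Set.subset_union_left.trans (h.trans hnew)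
    · rw [hM huv hcd]
      exact Set.subset_union_right.trans (h.trans hnew)

-- Moving the end `x` of the matching edge `xy` to `z` uncovers nothing, as `xy` covers nothing.
theorem IsOptimal.mem_coveredBridges_of_notMem_support (hm : IsOptimal G M)
    (hM : Relator.RightUnique M.Adj) (hG : G.Preconnected) (he : G.IsBridge s(x, y))
    (hxy : M.Adj x y) (hz : z ∉ M.support) (hzx : SameSide G s(x, y) z x) :
    s(x, y) ∈ coveredBridges G M := by
  classical
  set M' := M.comap (Equiv.swap x z)
  have hzx_ne : z ≠ x := by rintro rfl; exact hz ⟨y, hxy⟩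
  have hzy_ne : z ≠ y := by rintro rfl; exact hz ⟨x, hxy.symm⟩
  have hzy : M'.Adj z y := by
    simpa [M', Equiv.swap_apply_of_ne_of_ne hxy.ne.symm hzy_ne.symm] using hxy
  have hne_x {v : V} (hv : v ∈ M.support) (hvx : v ≠ x) : Equiv.swap x z v = v :=
    Equiv.swap_apply_of_ne_of_ne hvx (by rintro rfl; exact hz hv)
  refine hm.coveredBridges_comap_swap_subset ?_ ?_
    ⟨z, y, hzy, he, fun h ↦ he (hzx.symm.trans h), by simp [hzx_ne, hzy_ne]⟩
  · intro f hf u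
    obtain ⟨v, hv, huv⟩ := hm.1.2 f hf u
    by_cases hvx : v = x
    · subst hvx
      by_cases hfe : s(v, y) = f
      · exact ⟨z, ⟨y, hzy⟩, huv.trans (hfe ▸ hzx.symm)⟩
      · exact ⟨y, ⟨z, hzy.symm⟩, huv.trans (sameSide_of_adj (adj_of_isBridge hG he) hfe)⟩
    · exact ⟨v, mem_support_comap_swap.2 ((hne_x hv hvx).symm ▸ hv), huv⟩
  · rintro u v huv (rfl | rfl)
    · rw [hM huv hxy, bypassedBridges_eq_empty_of_adj (adj_of_isBridge hG he)]
      exact Set.empty_subset _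
    · exact absurd ⟨v, huv⟩ hz

theorem IsOptimal.sameSide_of_adj_of_adj (hm : IsOptimal G M) (hM : Relator.RightUnique M.Adj)
    (hG : G.Preconnected) (he : G.IsBridge e) (hcov : e ∉ coveredBridges G M) (hab : M.Adj a b)
    (hcd : M.Adj c d) (hab' : SameSide G e a b) (hcd' : SameSide G e c d) : SameSide G e a c := by
  by_contra hac
  have hbd : ¬ SameSide G e b d := fun h ↦ hac (hab'.trans (h.trans hcd'.symm))
  have hne_ac : a ≠ c := by rintro rfl; exact hac Reachable.rfl
  have hne_ad : a ≠ d := by rintro rfl; exact hac hcd'.symm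
  refine hcov (hm.bypassedBridges_union_subset hM hab hcd hne_ac hne_ad ?_ ?_)
  · refine Set.union_subset (bypassedBridges_subset_of_not_sameSide hG hab' hcd' hac) ?_
    rw [bypassedBridges_comm a c, bypassedBridges_comm b d]
    exact bypassedBridges_subset_of_not_sameSide hG hcd' hab' (hac ∘ Reachable.symm)
  · by_cases hace : s(a, c) = e
    · refine .inr ⟨he, hbd, fun hbde ↦ ?_⟩
      have : a ∈ s(b, d) := by simp [hbde, ← hace]
      rcases Sym2.mem_iff.1 this with h | h
      exacts [hab.ne h, hne_ad h]
    · exact .inl ⟨he, hac, hace⟩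

lemma IsOptimal.exists_adj_not_sameSide (hm : IsOptimal G M) (hM : Relator.RightUnique M.Adj)
    (hG : G.Preconnected) (he : G.IsBridge e) : ∃ u v, M.Adj u v ∧ ¬ SameSide G e u v := by
  by_contra! huncrossed
  have hcov : e ∉ coveredBridges G M := fun ⟨u, v, huv, _, hside, _⟩ ↦ hside (huncrossed u v huv)
  induction e with
  | h x y =>
    obtain ⟨a, ⟨b, hab⟩, hxa⟩ := hm.1.2 _ he x
    obtain ⟨c, ⟨d, hcd⟩, hyc⟩ := hm.1.2 _ he y
    have hac := hm.sameSide_of_adj_of_adj hM hG he hcov hab hcd (huncrossed a b hab)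
      (huncrossed c d hcd)
    exact he (hxa.trans (hac.trans hyc.symm))

lemma IsOptimal.adj_of_notMem_coveredBridges (hm : IsOptimal G M)
    (hM : Relator.RightUnique M.Adj) (hG : G.Preconnected) (he : G.IsBridge s(x, y))
    (hcov : s(x, y) ∉ coveredBridges G M) : M.Adj x y := by
  obtain ⟨u, v, huv, hside⟩ := hm.exists_adj_not_sameSide hM hG he
  have heq : s(u, v) = s(x, y) := by
    by_contra hne
    exact hcov ⟨u, v, huv, he, hside, hne⟩
  rwa [← mem_edgeSet, ← heq]

theorem IsOptimal.support_eq_univ (hm : IsOptimal G M) (hM : Relator.RightUnique M.Adj)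
    (hG : G.Preconnected) (he : G.IsBridge e) (hcov : e ∉ coveredBridges G M) :
    M.support = Set.univ := by
  refine Set.eq_univ_of_forall fun z ↦ ?_
  by_contra hz
  induction e with
  | h x y =>
    have hxy := hm.adj_of_notMem_coveredBridges hM hG he hcov
    rcases sameSide_left_or_right hG x y z with h | h
    · exact hcov (hm.mem_coveredBridges_of_notMem_support hM hG he hxy hz h.symm)
    · rw [Sym2.eq_swap] at he hcov h
      exact hcov (hm.mem_coveredBridges_of_notMem_support hM hG he hxy.symm hz h.symm)

lemma sameSide_of_notMem_coveredBridges (he : G.IsBridge e) (hcov : e ∉ coveredBridges G M)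
    (hcd : M.Adj c d) (hne : s(c, d) ≠ e) : SameSide G e c d := by
  by_contra hside
  exact hcov ⟨c, d, hcd, he, hside, hne⟩

-- Otherwise `xy` and `cd` could be replaced by `xc` and `yd`: the latter covers `xy`, and every
-- bridge covered by `cd` other than `xc` is covered by `xc` or `yd`.
theorem IsOptimal.isBridge_of_sameSide (hm : IsOptimal G M) (hM : Relator.RightUnique M.Adj)
    (hG : G.Preconnected) (he : G.IsBridge s(x, y)) (hcov : s(x, y) ∉ coveredBridges G M)
    (hc : c ∈ M.support) (hcx : c ≠ x) (hside : SameSide G s(x, y) x c) : G.IsBridge s(x, c) := by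
  obtain ⟨d, hcd⟩ := hc
  have hxy := hm.adj_of_notMem_coveredBridges hM hG he hcov
  have hGxy := adj_of_isBridge hG he
  have hcy : c ≠ y := by rintro rfl; exact he hside
  have hdx : d ≠ x := by rintro rfl; exact hcy (hM hcd.symm hxy)
  have hecd : SameSide G s(x, y) c d :=
    sameSide_of_notMem_coveredBridges he hcov hcd (by simp [hcx, hcy])
  have heyd : ¬ SameSide G s(x, y) y d := fun h ↦ he (hside.trans (hecd.trans h.symm))
  have hne_yd : s(y, d) ≠ s(x, y) := by simp [hdx, hGxy.ne.symm]
  by_contra hxc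
  refine hcov (hm.bypassedBridges_union_subset hM hxy hcd hcx.symm hdx.symm ?_
    (.inr ⟨he, heyd, hne_yd⟩))
  rw [bypassedBridges_eq_empty_of_adj hGxy, Set.empty_union]
  rintro f ⟨hf, hfcd, -⟩
  have hfe : f ≠ s(x, y) := by rintro rfl; exact hfcd hecd
  have hfxy : SameSide G f x y := sameSide_of_adj hGxy hfe.symm
  by_cases hfyd : SameSide G f y d
  · refine .inl ⟨hf, fun h ↦ hfcd (h.symm.trans (hfxy.trans hfyd)), ?_⟩
    rintro rfl
    exact hxc hf
  · refine .inr ⟨hf, hfyd, ?_⟩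
    rintro rfl
    exact heyd (sameSide_of_adj (adj_of_isBridge hG hf) hne_yd)

theorem IsOptimal.exists_forall_isBridge (hm : IsOptimal G M) (hM : Relator.RightUnique M.Adj)
    (hG : G.Preconnected) (he : G.IsBridge e) (hcov : e ∉ coveredBridges G M) :
    ∃ z, ∀ v, v ≠ z → G.IsBridge s(z, v) := by
  have hsupp (v : V) : v ∈ M.support := hm.support_eq_univ hM hG he hcov ▸ Set.mem_univ v
  induction e with
  | h x y =>
    have hside_mate {u v : V} (hux : u ≠ x) (huy : u ≠ y) (huv : M.Adj u v) :
        SameSide G s(x, y) u v :=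
      sameSide_of_notMem_coveredBridges he hcov huv (by simp [hux, huy])
    by_cases hx : ∃ c, c ≠ x ∧ c ≠ y ∧ SameSide G s(x, y) x c
    · obtain ⟨c, hcx, hcy, hc⟩ := hx
      refine ⟨x, fun v hvx ↦ ?_⟩
      by_cases hvy : v = y
      · rwa [hvy]
      obtain ⟨d, hcd⟩ := hsupp c
      obtain ⟨w, hvw⟩ := hsupp v
      have hcv : SameSide G s(x, y) c v := hm.sameSide_of_adj_of_adj hM hG he hcov hcd hvw
        (hside_mate hcx hcy hcd) (hside_mate hvx hvy hvw)
      exact hm.isBridge_of_sameSide hM hG he hcov ⟨w, hvw⟩ hvx (hc.trans hcv)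
    · push Not at hx
      refine ⟨y, fun v hvy ↦ ?_⟩
      rw [Sym2.eq_swap] at he hcov
      by_cases hvx : v = x
      · rwa [hvx]
      have hyv := (sameSide_left_or_right hG x y v).resolve_left (hx v hvx hvy)
      rw [Sym2.eq_swap] at hyv
      exact hm.isBridge_of_sameSide hM hG he hcov (hsupp v) hvy hyv

end Optimal

section Star

variable {V : Type*} {G M : SimpleGraph V} {c : V}

lemma eq_starGraph_of_forall_isBridge (hG : G.Preconnected)
    (h : ∀ v, v ≠ c → G.IsBridge s(c, v)) : G = starGraph c := by
  have hadj (v : V) (hv : v ≠ c) : G.Adj c v := adj_of_isBridge hG (h v hv)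
  ext u v
  rw [starGraph_adj]
  refine ⟨fun huv ↦ ⟨huv.ne, ?_⟩, ?_⟩
  · by_contra! hc
    have hcu : SameSide G s(c, v) c u := sameSide_of_adj (hadj u hc.1) (by simp [huv.ne, hc.1])
    exact h v hc.2 (hcu.trans (sameSide_of_adj huv (by simp [huv.ne, hc.1])))
  · rintro ⟨huv, rfl | rfl⟩
    exacts [hadj v huv.symm, (hadj u huv).symm]

theorem IsOptimal.twoEdgeConnected_sup_or_eq_starGraph (hm : IsOptimal G M)
    (hM : Relator.RightUnique M.Adj) (hG : G.Connected) :
    TwoEdgeConnected (G ⊔ M) ∨ M.support = Set.univ ∧ ∃ c, G = starGraph c := by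
  by_cases hcov : ∀ e, G.IsBridge e → e ∈ coveredBridges G M
  · exact .inl (twoEdgeConnected_sup hG hcov)
  push Not at hcov
  obtain ⟨e, he, hcov⟩ := hcov
  obtain ⟨c, hc⟩ := hm.exists_forall_isBridge hM hG.preconnected he hcov
  exact .inr ⟨hm.support_eq_univ hM hG.preconnected he hcov, c,
    eq_starGraph_of_forall_isBridge hG.preconnected hc⟩

lemma completeBipartiteGraph_fin_one_eq_starGraph (W : Type*) :
    completeBipartiteGraph (Fin 1) W = starGraph (.inl 0) := by
  ext u v
  rcases u with u | u <;> rcases v with v | v <;> simp [Fin.fin_one_eq_zero]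

theorem nonempty_iso_completeBipartiteGraph_fin_one_iff [Fintype V] {n : ℕ} :
    Nonempty (G ≃g completeBipartiteGraph (Fin 1) (Fin n)) ↔
      Fintype.card V = n + 1 ∧ ∃ c, G = starGraph c := by
  classical
  rw [completeBipartiteGraph_fin_one_eq_starGraph]
  constructor
  · rintro ⟨E⟩
    refine ⟨by simp [E.card_eq, add_comm], E.symm (.inl 0), ?_⟩
    ext u v
    rw [← E.map_adj_iff, starGraph_adj, starGraph_adj]
    simp [RelIso.eq_symm_apply]
  · rintro ⟨hcard, c, rfl⟩
    let E₀ : V ≃ Fin 1 ⊕ Fin n := Fintype.equivOfCardEq (by simp [hcard, add_comm])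
    let E : V ≃ Fin 1 ⊕ Fin n := E₀.trans (Equiv.swap (E₀ c) (.inl 0))
    have hE (v : V) : E v = .inl 0 ↔ v = c := by
      rw [← E.injective.eq_iff]; simp [E]
    exact ⟨E, by simp [hE]⟩

lemma TwoEdgeConnected.exists_adj_ne {v : V} (hG : TwoEdgeConnected G) (hv : v ≠ c) :
    ∃ w, G.Adj v w ∧ w ≠ c := by
  by_contra! h
  refine hG.2 s(v, c) (isBridge_iff.2 fun ⟨p⟩ ↦ ?_)
  cases p with
  | nil => exact hv rfl
  | cons hadj p =>
    rw [deleteEdges_adj] at hadj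
    exact hadj.2 (by rw [h _ hadj.1]; rfl)

theorem support_eq_compl_of_twoEdgeConnected_starGraph_sup (hM : Relator.RightUnique M.Adj)
    (h : TwoEdgeConnected (starGraph c ⊔ M)) : M.support = {c}ᶜ := by
  have hleaf (v : V) (hv : v ≠ c) : ∃ w, M.Adj v w ∧ w ≠ c := by
    obtain ⟨w, hvw | hvw, hw⟩ := h.exists_adj_ne hv
    · exact absurd (starGraph_adj.1 hvw).2 (by simp [hv, hw])
    · exact ⟨w, hvw, hw⟩
  ext v
  refine ⟨?_, fun hv ↦ (hleaf v hv).imp fun _ ↦ And.left⟩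
  rintro ⟨w, hvw⟩ rfl
  obtain ⟨w', hw', hne⟩ := hleaf w hvw.ne.symm
  exact hne (hM hw' hvw.symm)

end Star

section Matching

variable {α β : Type*} {G : SimpleGraph α} {H : SimpleGraph β}

lemma IsMatchingGraph.rightUnique_adj (hH : IsMatchingGraph H) : Relator.RightUnique H.Adj :=
  fun _ _ _ h h' ↦ (hH.2 _).unique h h'

lemma IsMatchingGraph.support_eq_univ (hH : IsMatchingGraph H) : H.support = Set.univ :=
  Set.eq_univ_of_forall fun v ↦ (hH.2 v).exists

lemma IsMatchingGraph.support_map (hH : IsMatchingGraph H) (φ : β ↪ α) :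
    (H.map φ).support = Set.range φ := by
  rw [SimpleGraph.support_map, hH.support_eq_univ, Set.image_univ]

lemma IsMatchingGraph.even_card [Fintype β] (hH : IsMatchingGraph H) : Even (Fintype.card β) :=
  (Subgraph.isPerfectMatching_iff (M := (⊤ : H.Subgraph))).2 hH.2 |>.even_card

lemma rightUnique_adj_map (hH : Relator.RightUnique H.Adj) (φ : β ↪ α) :
    Relator.RightUnique (H.map φ).Adj := by
  intro u v w huv huw
  obtain ⟨a, b, hab, rfl, rfl⟩ := (map_adj φ H _ _).1 huv
  obtain ⟨a', c, hac, ha, rfl⟩ := (map_adj φ H _ _).1 huw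
  rw [hH hab (φ.injective ha ▸ hac)]

lemma IsMatchingGraph.card_eq_of_support_map_eq_univ [Fintype α] [Fintype β]
    (hH : IsMatchingGraph H) {φ : β ↪ α} (h : (H.map φ).support = Set.univ) :
    Fintype.card β = Fintype.card α :=
  Fintype.card_of_bijective ⟨φ.injective, Set.range_eq_univ.1 (hH.support_map φ ▸ h)⟩

theorem IsMatchingGraph.card_add_one_eq_of_twoEdgeConnected_starGraph_sup [Fintype α] [Fintype β]
    (hH : IsMatchingGraph H) {c : α} (φ : β ↪ α)
    (h : TwoEdgeConnected (starGraph c ⊔ H.map φ)) : Fintype.card β + 1 = Fintype.card α := by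
  have hrange : Set.range φ = {c}ᶜ := hH.support_map φ ▸
    support_eq_compl_of_twoEdgeConnected_starGraph_sup
      (rightUnique_adj_map hH.rightUnique_adj φ) h
  rw [← Nat.card_eq_fintype_card (α := β), ← Nat.card_range_of_injective φ.injective, hrange,
    Nat.card_coe_set_eq, ← Set.ncard_singleton c, add_comm, Set.ncard_add_ncard_compl,
    Nat.card_eq_fintype_card]

lemma exists_map_eq_of_iso {φ : β ↪ α} (E : H.map φ ≃g G) : ∃ ψ : β ↪ α, H.map ψ = G := by
  refine ⟨φ.trans E.toEquiv.toEmbedding, ?_⟩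
  calc H.map (φ.trans E.toEquiv.toEmbedding)
      = (H.map φ).map E.toEquiv := (map_map _ φ E.toEquiv).symm
    _ = (H.map φ).comap E.symm := (comap_symm _ E.toEquiv).symm
    _ = G := Embedding.comap_eq E.symm.toEmbedding

lemma exists_embedding_subset_range [Fintype α] [Fintype β] {S : Set α}
    (hS : S.ncard ≤ Fintype.card β) (hcard : Fintype.card β ≤ Fintype.card α) :
    ∃ φ : β ↪ α, S ⊆ Set.range φ := by
  classical
  rw [Set.ncard_eq_toFinset_card'] at hS
  obtain ⟨T, hST, hT⟩ := Finset.exists_superset_card_eq hS hcard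
  let E : β ≃ T := Fintype.equivOfCardEq (by simp [hT])
  exact ⟨E.toEmbedding.trans (.subtype _), fun v hv ↦
    ⟨E.symm ⟨v, hST (Set.mem_toFinset.2 hv)⟩, by simp⟩⟩

end Matching

/-- Let `G` be connected and `H` a matching graph with `2 ≤ p(G) ≤ |V(H)| ≤ |V(G)|`.
Then there is an injective `φ : V(H) ↪ V(G)` with `F = G ⊕_φ H` edge 2-connected iff
`G` is not isomorphic to a star `K_{1,n}` with `n` odd. -/
theorem stmt14 {α β : Type*} [Fintype α] [Fintype β]
    (G : SimpleGraph α) (hG : G.Connected)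
    (H : SimpleGraph β) (hH : IsMatchingGraph H)
    (h2 : 2 ≤ numPendant G) (hpc : numPendant G ≤ Fintype.card β)
    (hcard : Fintype.card β ≤ Fintype.card α) :
    (∃ φ : β ↪ α, TwoEdgeConnected (superpose G H φ)) ↔
      ¬ ∃ n : ℕ, Odd n ∧ Nonempty (G ≃g completeBipartiteGraph (Fin 1) (Fin n)) := by
  simp only [nonempty_iso_completeBipartiteGraph_fin_one_iff]
  constructor
  · rintro ⟨φ, hF⟩ ⟨n, hn, hn', c, rfl⟩
    have hβ : Fintype.card β = n := by
      simpa [hn'] using hH.card_add_one_eq_of_twoEdgeConnected_starGraph_sup φ hF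
    exact Nat.not_even_iff_odd.2 hn (hβ ▸ hH.even_card)
  · intro hstar
    obtain ⟨S, hS, hScard⟩ := exists_meetsSides_ncard_le_numPendant hG.preconnected
    obtain ⟨φ₀, hφ₀⟩ := exists_embedding_subset_range (hScard.trans hpc) hcard
    obtain ⟨M, ⟨E⟩, hM⟩ := exists_isOptimal (M := H.map φ₀) (hS.mono (by rwa [hH.support_map]))
    obtain ⟨φ, rfl⟩ := exists_map_eq_of_iso E
    have hφ := rightUnique_adj_map hH.rightUnique_adj φ
    refine ⟨φ, (hM.twoEdgeConnected_sup_or_eq_starGraph hφ hG).resolve_right ?_⟩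
    rintro ⟨hsupp, c, hc⟩
    have heven : Even (Fintype.card α) := hH.card_eq_of_support_map_eq_univ hsupp ▸ hH.even_card
    obtain ⟨n, hn⟩ := Nat.exists_eq_succ_of_ne_zero (Fintype.card_pos_iff.2 ⟨c⟩).ne'
    rw [hn, Nat.even_add_one, Nat.not_even_iff_odd] at heven
    exact hstar ⟨n, heven, hn, c, hc⟩
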